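/- Let n ≥ 1, A ∈ Mat_n(ℝ), and f₁, f₂ : ℕ → ℝⁿ with f₁(0) = f₂(0). Then there is a unique function x : ℕ² → ℝⁿ satisfying x(t¹+1, t²+1) = A·x(t¹,t²) for all (t¹,t²) ∈ ℕ², x(0,t²) = f₁(t²) for all t² ∈ ℕ, and x(t¹,0) = f₂(t¹) for all t¹ ∈ ℕ; it is given by x(t¹,t²) = A^{t¹} f₁(t²−t¹) if t¹ ≤ t², and x(t¹,t²) = A^{t²} f₂(t¹−t²) if t² ≤ t¹. -/

import Mathlib

/-!
The recurrence advances both coordinates at once, so it acts independently along each diagonal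
`{(i + k, j + k) | k : ℕ}`. Every diagonal starts at exactly one point of the coordinate axes, and
the boundary value there is carried along it by iterating the map; `f1 0 = f2 0` makes the two
prescriptions at the corner agree. For `A.mulVec` the iterates are the powers of `A`.
-/

section DiagonalRecurrence

variable {α : Type*} {φ : α → α} {x y : ℕ → ℕ → α}

theorem diagonal_add_eq_iterate (hx : ∀ i j, x (i + 1) (j + 1) = φ (x i j)) (i j k : ℕ) :
    x (i + k) (j + k) = φ^[k] (x i j) := by
  induction k with
  | zero => rfl
  | succ k ih => rw [← add_assoc, ← add_assoc, hx, ih, Function.iterate_succ_apply']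

theorem diagonal_eq_iterate_of_le (hx : ∀ i j, x (i + 1) (j + 1) = φ (x i j)) {i j : ℕ}
    (hij : i ≤ j) : x i j = φ^[i] (x 0 (j - i)) := by
  simpa only [zero_add, Nat.sub_add_cancel hij] using diagonal_add_eq_iterate hx 0 (j - i) i

theorem diagonal_eq_iterate_of_ge (hx : ∀ i j, x (i + 1) (j + 1) = φ (x i j)) {i j : ℕ}
    (hji : j ≤ i) : x i j = φ^[j] (x (i - j) 0) := by
  simpa only [zero_add, Nat.sub_add_cancel hji] using diagonal_add_eq_iterate hx (i - j) 0 j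

theorem eq_of_diagonal_of_axes (hx : ∀ i j, x (i + 1) (j + 1) = φ (x i j))
    (hy : ∀ i j, y (i + 1) (j + 1) = φ (y i j)) (hleft : ∀ j, x 0 j = y 0 j)
    (hbottom : ∀ i, x i 0 = y i 0) : x = y := by
  funext i j
  rcases le_total i j with hij | hji
  · rw [diagonal_eq_iterate_of_le hx hij, diagonal_eq_iterate_of_le hy hij, hleft]
  · rw [diagonal_eq_iterate_of_ge hx hji, diagonal_eq_iterate_of_ge hy hji, hbottom]

/-- The extension of boundary data `f` on `{0} × ℕ` and `g` on `ℕ × {0}` to `ℕ × ℕ` along the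
diagonals by `φ`. At the corner it takes the value `f 0`, so `g 0` is ignored. -/
def diagonalExtension (φ : α → α) (f g : ℕ → α) : ℕ → ℕ → α
  | 0, j => f j
  | i + 1, 0 => g (i + 1)
  | i + 1, j + 1 => φ (diagonalExtension φ f g i j)

theorem diagonalExtension_succ_succ (φ : α → α) (f g : ℕ → α) (i j : ℕ) :
    diagonalExtension φ f g (i + 1) (j + 1) = φ (diagonalExtension φ f g i j) := by
  rw [diagonalExtension]

theorem diagonalExtension_zero_left (φ : α → α) (f g : ℕ → α) (j : ℕ) :
    diagonalExtension φ f g 0 j = f j := by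
  rw [diagonalExtension]

theorem diagonalExtension_zero_right (φ : α → α) {f g : ℕ → α} (h0 : f 0 = g 0) (i : ℕ) :
    diagonalExtension φ f g i 0 = g i := by
  cases i with
  | zero => rw [diagonalExtension, h0]
  | succ i => rw [diagonalExtension]

theorem existsUnique_diagonal (φ : α → α) {f g : ℕ → α} (h0 : f 0 = g 0) :
    ∃! x : ℕ → ℕ → α,
      (∀ i j, x (i + 1) (j + 1) = φ (x i j)) ∧ (∀ j, x 0 j = f j) ∧ (∀ i, x i 0 = g i) := by
  refine ⟨diagonalExtension φ f g, ⟨diagonalExtension_succ_succ φ f g,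
    diagonalExtension_zero_left φ f g, diagonalExtension_zero_right φ h0⟩, ?_⟩
  rintro y ⟨hy, hleft, hbottom⟩
  refine eq_of_diagonal_of_axes hy (diagonalExtension_succ_succ φ f g) (fun j ↦ ?_) (fun i ↦ ?_)
  · rw [hleft, diagonalExtension_zero_left]
  · rw [hbottom, diagonalExtension_zero_right φ h0]

end DiagonalRecurrence

theorem mulVec_iterate {m R : Type*} [Fintype m] [DecidableEq m] [Semiring R]
    (A : Matrix m m R) (k : ℕ) (v : m → R) : A.mulVec^[k] v = (A ^ k).mulVec v := by
  induction k with
  | zero => rw [Function.iterate_zero_apply, pow_zero, Matrix.one_mulVec]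
  | succ k ih => rw [Function.iterate_succ_apply', ih, Matrix.mulVec_mulVec, pow_succ']

theorem stmt_17_general {α : Type*} (φ : α → α) (f1 f2 : ℕ → α) (h0 : f1 0 = f2 0) :
    (∃! x : ℕ → ℕ → α,
        (∀ t1 t2 : ℕ, x (t1 + 1) (t2 + 1) = φ (x t1 t2)) ∧
        (∀ t2 : ℕ, x 0 t2 = f1 t2) ∧
        (∀ t1 : ℕ, x t1 0 = f2 t1)) ∧
    (∀ x : ℕ → ℕ → α,
        (∀ t1 t2 : ℕ, x (t1 + 1) (t2 + 1) = φ (x t1 t2)) →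
        (∀ t2 : ℕ, x 0 t2 = f1 t2) →
        (∀ t1 : ℕ, x t1 0 = f2 t1) →
        (∀ t1 t2 : ℕ, t1 ≤ t2 → x t1 t2 = φ^[t1] (f1 (t2 - t1))) ∧
        (∀ t1 t2 : ℕ, t2 ≤ t1 → x t1 t2 = φ^[t2] (f2 (t1 - t2)))) := by
  refine ⟨existsUnique_diagonal φ h0, fun x hx hleft hbottom ↦
    ⟨fun t1 t2 hle ↦ ?_, fun t1 t2 hge ↦ ?_⟩⟩
  · rw [diagonal_eq_iterate_of_le hx hle, hleft]
  · rw [diagonal_eq_iterate_of_ge hx hge, hbottom]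

/-- Bivariate example: the diagonal recurrence `x(t¹+1, t²+1) = A x(t¹,t²)`
with boundary data `f₁, f₂` has a unique solution, given explicitly. -/
theorem stmt_17 (n : ℕ) (hn : 1 ≤ n) (A : Matrix (Fin n) (Fin n) ℝ)
    (f1 f2 : ℕ → Fin n → ℝ) (h0 : f1 0 = f2 0) :
    (∃! x : ℕ → ℕ → Fin n → ℝ,
        (∀ t1 t2 : ℕ, x (t1 + 1) (t2 + 1) = A.mulVec (x t1 t2)) ∧
        (∀ t2 : ℕ, x 0 t2 = f1 t2) ∧
        (∀ t1 : ℕ, x t1 0 = f2 t1)) ∧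
    (∀ x : ℕ → ℕ → Fin n → ℝ,
        (∀ t1 t2 : ℕ, x (t1 + 1) (t2 + 1) = A.mulVec (x t1 t2)) →
        (∀ t2 : ℕ, x 0 t2 = f1 t2) →
        (∀ t1 : ℕ, x t1 0 = f2 t1) →
        (∀ t1 t2 : ℕ, t1 ≤ t2 → x t1 t2 = (A ^ t1).mulVec (f1 (t2 - t1))) ∧
        (∀ t1 t2 : ℕ, t2 ≤ t1 → x t1 t2 = (A ^ t2).mulVec (f2 (t1 - t2)))) := by
  simpa only [mulVec_iterate] using stmt_17_general A.mulVec f1 f2 h0
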